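/- Let T be a triangulated category with a semiorthogonal decomposition T = ⟨T₁, T₂⟩ and compatible t-structures T₁^{≤0}, T₂^{≤0} with hearts A₁, A₂, and let A = A₂ * (A₁[1]) be the glued heart on T. Assume: (1) for i = 1, 2, the category T_i has the factorization property for A_i; and (2) for every A ∈ A₁[1], every B ∈ A₂ and every m ≥ 1, every morphism A → B[m] in T factors as A → C_{m−1}[1] → C_{m−2}[2] → … → C_1[m−1] → B[m] with all C_j ∈ A. Then T has the factorization property for A (i.e. T has all the Ext groups of the heart A). -/

import Mathlib

open CategoryTheory Category Limits Pretriangulated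

namespace Paper

universe v u

variable {C : Type u} [Category.{v} C] [HasZeroObject C] [Preadditive C]
  [HasShift C ℤ] [∀ n : ℤ, (shiftFunctor C n).Additive] [Pretriangulated C]

/-- The right orthogonal of a set of objects: objects receiving only zero maps. -/
def rOrth (S : Set C) : Set C := {Y | ∀ X ∈ S, ∀ f : X ⟶ Y, f = 0}

/-- Shift of a set of objects by `n` (closed under isomorphism). -/
def shSet (S : Set C) (n : ℤ) : Set C := {Y | ∃ X ∈ S, Nonempty (Y ≅ X⟦n⟧)}

/-- The `*` operation on sets of objects of a triangulated category. -/
def star (X Y : Set C) : Set C :=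
  {Z | ∃ (A : C) (_ : A ∈ X) (B : C) (_ : B ∈ Y) (f : A ⟶ Z) (g : Z ⟶ B)
    (h : B ⟶ A⟦(1 : ℤ)⟧), Triangle.mk f g h ∈ distTriang C}

/-- A strictly full triangulated subcategory, encoded as a set of objects. -/
structure IsTriangulatedSub (S : Set C) : Prop where
  zero : ∀ X : C, IsZero X → X ∈ S
  isoClosed : ∀ {X Y : C}, (X ≅ Y) → X ∈ S → Y ∈ S
  shift : ∀ (n : ℤ), ∀ X ∈ S, X⟦n⟧ ∈ S
  ext₂ : ∀ T ∈ distTriang C, T.obj₁ ∈ S → T.obj₃ ∈ S → T.obj₂ ∈ S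

/-- A t-structure on the full triangulated subcategory `S ⊆ C`, given by its aisle
`le` (playing the role of `S^{≤ 0}`).  The coaisle `S^{≥ 1}` is `S ∩ rOrth le`. -/
structure IsTStructureOn (S le : Set C) : Prop where
  subset : le ⊆ S
  isoClosed : ∀ {X Y : C}, (X ≅ Y) → X ∈ le → Y ∈ le
  shift : ∀ X ∈ le, X⟦(1 : ℤ)⟧ ∈ le
  exists_triangle : ∀ E ∈ S, ∃ (A B : C) (_ : A ∈ le) (_ : B ∈ S ∩ rOrth le)
    (f : A ⟶ E) (g : E ⟶ B) (h : B ⟶ A⟦(1 : ℤ)⟧), Triangle.mk f g h ∈ distTriang C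

/-- `S^{≤ i} := S^{≤ 0}[-i]`. -/
def leN (le : Set C) (i : ℤ) : Set C := shSet le (-i)

/-- `S^{≥ j} := S^{≥ 1}[-j+1]`. -/
def geN (S le : Set C) (j : ℤ) : Set C := shSet (S ∩ rOrth le) (1 - j)

/-- The heart `S^{≤ 0} ∩ S^{≥ 0}` of a t-structure on `S`. -/
def heartOn (S le : Set C) : Set C := leN le 0 ∩ geN S le 0

/-- Boundedness of a t-structure on `S`. -/
def IsBoundedOn (S le : Set C) : Prop := ∀ E ∈ S, ∃ i j : ℤ, E ∈ leN le i ∧ E ∈ geN S le j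

/-- Non-degeneracy of a t-structure on `S`. -/
def IsNonDegenerateOn (S le : Set C) : Prop :=
  (∀ E : C, (∀ i : ℤ, E ∈ leN le i) → IsZero E) ∧
  (∀ E : C, (∀ j : ℤ, E ∈ geN S le j) → IsZero E)

/-- A semiorthogonal decomposition `C = ⟨S₁, S₂⟩`. -/
structure IsSOD (S₁ S₂ : Set C) : Prop where
  sub₁ : IsTriangulatedSub S₁
  sub₂ : IsTriangulatedSub S₂
  orth : ∀ X ∈ S₂, ∀ Y ∈ S₁, ∀ f : X ⟶ Y, f = 0
  exists_triangle : ∀ E : C, ∃ (A B : C) (_ : A ∈ S₂) (_ : B ∈ S₁)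
    (f : A ⟶ E) (g : E ⟶ B) (h : B ⟶ A⟦(1 : ℤ)⟧), Triangle.mk f g h ∈ distTriang C

/-- Compatibility of t-structures `le₁` on `S₁` and `le₂` on `S₂` in `C`:
`Hom(S₁^{≤0}, S₂^{≥1}) = 0`. -/
def Compatible (S₂ le₁ le₂ : Set C) : Prop :=
  ∀ X ∈ le₁, ∀ Y ∈ S₂ ∩ rOrth le₂, ∀ f : X ⟶ Y, f = 0

/-- The glued aisle `T^{≤0} := T₂^{≤0} * (T₁^{≤0}[1])`. -/
def glued (le₁ le₂ : Set C) : Set C := star le₂ (shSet le₁ 1)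

/-- `FactorsDeg H n f` : the morphism `f : A ⟶ B⟦n⟧` admits a factorization
`A ⟶ C_{n-1}[1] ⟶ C_{n-2}[2] ⟶ … ⟶ C_1[n-1] ⟶ B[n]` with all `C_i ∈ H`. -/
def FactorsDeg (H : Set C) : (n : ℕ) → ∀ {A B : C}, (A ⟶ B⟦(n : ℤ)⟧) → Prop
  | 0, _, _, _ => True
  | 1, _, _, _ => True
  | (n+2), A, B, f => ∃ (D : C) (_ : D ∈ H) (g : A ⟶ D⟦(1:ℤ)⟧) (h : D ⟶ B⟦((n+1 : ℕ) : ℤ)⟧),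
      FactorsDeg H (n+1) h ∧
      f = g ≫ h⟦(1:ℤ)⟧' ≫
        (shiftFunctorAdd' C ((n+1 : ℕ) : ℤ) 1 ((n+2 : ℕ) : ℤ) (by push_cast; ring)).inv.app B

/-- `C` has all the Ext groups of `H` (factorization property). -/
def HasAllExt (H : Set C) : Prop :=
  ∀ (n : ℕ), ∀ A ∈ H, ∀ B ∈ H, ∀ f : A ⟶ B⟦(n : ℤ)⟧, FactorsDeg H n f

/-!
Let `U = T₂^{≤0} ∪ T₁^{≤0}[1]`. The glued heart is the orthogonality class `^⊥(U^⊥) ∩ (U[1])^⊥`,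
so it is closed under extensions, and under fibres of composites of epimorphisms, without the
octahedral axiom. The factorization property amounts to effaceability of every `f : A ⟶ B[n]` with
`n ≥ 2`, and by the closure properties effaceability may be tested after composing with an
epimorphism of the heart onto `A`.

Induct on `n` and let `f : A ⟶ B[n + 1]` where `A` is an extension of `A' ∈ A₁[1]` by `A'' ∈ A₂`.
By semiorthogonality the restriction of `f` to `A''` comes from the component of `B` in `T₂`, so
it factors there and ends in a degree one morphism `k : D ⟶ B[1]`. Embedding `B` into the
extension `B'` of `D` by `B` with class `k` kills `k`, so the image of `f` in `Hom(A, B'[n + 1])`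
factors through `A'`, where assumptions (1) and (2) make it effaceable. Thus some epimorphism
`E ⟶ A` kills this image, and then `E ⟶ A ⟶ B[n + 1]` factors as `E ⟶ D[n] ⟶ B[n + 1]`, the first
map being effaceable by induction.
-/

section Orthogonals

variable {D : Type*} [Category* D]

/-- Closure of a set of objects under isomorphism, the condition under which `shSet` is computed by
shifting back: `X ∈ shSet S n ↔ X⟦-n⟧ ∈ S`. -/
def IsIsoClosed (S : Set D) : Prop := ∀ ⦃X Y : D⦄, (X ≅ Y) → X ∈ S → Y ∈ S

/-- The left orthogonal `^⊥S` of a set of objects, the counterpart of `rOrth`. -/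
def lOrth [Preadditive D] (S : Set D) : Set D := {X | ∀ Y ∈ S, ∀ f : X ⟶ Y, f = 0}

lemma IsIsoClosed.mem_iff {S : Set D} (hS : IsIsoClosed S) {X Y : D} (e : X ≅ Y) :
    X ∈ S ↔ Y ∈ S :=
  ⟨hS e, hS e.symm⟩

lemma IsIsoClosed.inter {S S' : Set D} (hS : IsIsoClosed S) (hS' : IsIsoClosed S') :
    IsIsoClosed (S ∩ S') :=
  fun _ _ e hX ↦ ⟨hS e hX.1, hS' e hX.2⟩

section Shift

variable [HasShift D ℤ] {S S' : Set D} {X Y : D}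

lemma shift_mem_shSet (n : ℤ) (hX : X ∈ S) : X⟦n⟧ ∈ shSet S n := ⟨X, hX, ⟨Iso.refl _⟩⟩

lemma shSet_mono (h : S ⊆ S') (n : ℤ) : shSet S n ⊆ shSet S' n :=
  fun _ ⟨X, hX, e⟩ ↦ ⟨X, h hX, e⟩

lemma mem_shSet_iff (hS : IsIsoClosed S) (n : ℤ) : X ∈ shSet S n ↔ X⟦-n⟧ ∈ S := by
  constructor
  · rintro ⟨Y, hY, ⟨e⟩⟩
    exact hS ((shiftFunctor D (-n)).mapIso e ≪≫ shiftShiftNeg Y n).symm hY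
  · exact fun hX ↦ ⟨_, hX, ⟨(shiftNegShift X n).symm⟩⟩

lemma shSet_zero (hS : IsIsoClosed S) : shSet S 0 = S := by
  ext X
  rw [mem_shSet_iff hS]
  exact hS.mem_iff ((shiftFunctorZero' D (-0) neg_zero).app X)

lemma shSet_shSet (S : Set D) (a b c : ℤ) (h : a + b = c) : shSet (shSet S a) b = shSet S c := by
  ext Y
  constructor
  · rintro ⟨X, ⟨Z, hZ, ⟨e⟩⟩, ⟨e'⟩⟩
    exact ⟨Z, hZ, ⟨e' ≪≫ (shiftFunctor D b).mapIso e ≪≫ (shiftFunctorAdd' D a b c h).symm.app Z⟩⟩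
  · rintro ⟨Z, hZ, ⟨e⟩⟩
    exact ⟨_, shift_mem_shSet a hZ, ⟨e ≪≫ (shiftFunctorAdd' D a b c h).app Z⟩⟩

lemma shSet_inter (hS : IsIsoClosed S) (hS' : IsIsoClosed S') (n : ℤ) :
    shSet (S ∩ S') n = shSet S n ∩ shSet S' n := by
  ext X
  simp only [Set.mem_inter_iff, mem_shSet_iff (hS.inter hS'), mem_shSet_iff hS, mem_shSet_iff hS']

lemma shSet_union (S S' : Set D) (n : ℤ) : shSet (S ∪ S') n = shSet S n ∪ shSet S' n := by
  ext X
  simp only [shSet, Set.mem_union, Set.mem_ofPred_eq, or_and_right, exists_or]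

end Shift

section Preadditive

variable [Preadditive D] {S S' : Set D} {X Y : D}

lemma rOrth_anti (h : S ⊆ S') : rOrth S' ⊆ rOrth S := fun _ hY X hX ↦ hY X (h hX)

lemma lOrth_anti (h : S ⊆ S') : lOrth S' ⊆ lOrth S := fun _ hX Y hY ↦ hX Y (h hY)

lemma subset_lOrth_rOrth (S : Set D) : S ⊆ lOrth (rOrth S) := fun X hX _ hY ↦ hY X hX

lemma rOrth_union (S S' : Set D) : rOrth (S ∪ S') = rOrth S ∩ rOrth S' := by
  ext Y
  simp only [rOrth, Set.mem_union, or_imp, forall_and, Set.mem_inter_iff, Set.mem_ofPred_eq]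

lemma isIsoClosed_rOrth (S : Set D) : IsIsoClosed (rOrth S) := fun _ _ e hX Z hZ f ↦ by
  rw [← cancel_mono e.inv, hX Z hZ (f ≫ e.inv), zero_comp]

lemma isIsoClosed_lOrth (S : Set D) : IsIsoClosed (lOrth S) := fun _ _ e hX Z hZ f ↦ by
  rw [← cancel_epi e.hom, hX Z hZ (e.hom ≫ f), comp_zero]

variable [HasShift D ℤ] [∀ n : ℤ, (shiftFunctor D n).Additive]

lemma forall_shift_hom_eq_zero_iff (n : ℤ) :
    (∀ f : X⟦n⟧ ⟶ Y⟦n⟧, f = 0) ↔ ∀ f : X ⟶ Y, f = 0 := by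
  rw [(shiftFunctor D n).map_surjective.forall]
  simp only [Functor.map_eq_zero_iff]

lemma shift_mem_rOrth_shSet_iff (n : ℤ) : Y⟦n⟧ ∈ rOrth (shSet S n) ↔ Y ∈ rOrth S := by
  constructor
  · exact fun hY X hX ↦ (forall_shift_hom_eq_zero_iff n).1 (hY _ (shift_mem_shSet n hX))
  · rintro hY _ ⟨X, hX, ⟨e⟩⟩ f
    rw [← cancel_epi e.inv, comp_zero]
    exact (forall_shift_hom_eq_zero_iff n).2 (hY X hX) _

lemma shift_mem_lOrth_shSet_iff (n : ℤ) : X⟦n⟧ ∈ lOrth (shSet S n) ↔ X ∈ lOrth S := by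
  constructor
  · exact fun hX Y hY ↦ (forall_shift_hom_eq_zero_iff n).1 (hX _ (shift_mem_shSet n hY))
  · rintro hX _ ⟨Y, hY, ⟨e⟩⟩ f
    rw [← cancel_mono e.hom, zero_comp]
    exact (forall_shift_hom_eq_zero_iff n).2 (hX Y hY) _

lemma rOrth_shSet (S : Set D) (n : ℤ) : rOrth (shSet S n) = shSet (rOrth S) n := by
  ext Y
  rw [mem_shSet_iff (isIsoClosed_rOrth S), ← shift_mem_rOrth_shSet_iff (Y := Y⟦-n⟧) n]
  exact (isIsoClosed_rOrth _).mem_iff (shiftNegShift Y n).symm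

lemma lOrth_shSet (S : Set D) (n : ℤ) : lOrth (shSet S n) = shSet (lOrth S) n := by
  ext X
  rw [mem_shSet_iff (isIsoClosed_lOrth S), ← shift_mem_lOrth_shSet_iff (X := X⟦-n⟧) n]
  exact (isIsoClosed_lOrth _).mem_iff (shiftNegShift X n).symm

end Preadditive

end Orthogonals

section Triangles

variable {S : Set C} {T : Triangle C}

lemma rOrth_ext₂ (hT : T ∈ distTriang C) (h₁ : T.obj₁ ∈ rOrth S) (h₃ : T.obj₃ ∈ rOrth S) :
    T.obj₂ ∈ rOrth S := fun X hX f ↦ by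
  obtain ⟨g, rfl⟩ := T.coyoneda_exact₂ hT f (h₃ X hX _)
  rw [h₁ X hX g, zero_comp]

lemma lOrth_ext₂ (hT : T ∈ distTriang C) (h₁ : T.obj₁ ∈ lOrth S) (h₃ : T.obj₃ ∈ lOrth S) :
    T.obj₂ ∈ lOrth S := fun Y hY f ↦ by
  obtain ⟨g, rfl⟩ := T.yoneda_exact₂ hT f (h₁ Y hY _)
  rw [h₃ Y hY g, comp_zero]

lemma eq_zero_of_mor₂_comp_eq_zero (hT : T ∈ distTriang C) (h₁ : T.obj₁⟦(1 : ℤ)⟧ ∈ lOrth S)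
    {Y : C} (hY : Y ∈ S) {f : T.obj₃ ⟶ Y} (hf : T.mor₂ ≫ f = 0) : f = 0 := by
  obtain ⟨g, rfl⟩ := T.yoneda_exact₃ hT f hf
  rw [h₁ Y hY g, comp_zero]

lemma coyoneda_exact₂_shift (hT : T ∈ distTriang C) {W : C} {n : ℤ} (f : W ⟶ T.obj₂⟦n⟧)
    (hf : f ≫ T.mor₂⟦n⟧' = 0) : ∃ g : W ⟶ T.obj₁⟦n⟧, f = g ≫ T.mor₁⟦n⟧' := by
  obtain ⟨g, hg⟩ := (ShortComplex.ab_exact_iff _).1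
    ((preadditiveCoyoneda.obj (.op W)).homologySequence_exact₂ T hT n) f hf
  exact ⟨g, hg.symm⟩

lemma coyoneda_exact₁_shift (hT : T ∈ distTriang C) {W : C} {n n' : ℤ} (h : n + 1 = n')
    (f : W ⟶ T.obj₁⟦n'⟧) (hf : f ≫ T.mor₁⟦n'⟧' = 0) :
    ∃ g : ShiftedHom W T.obj₃ n, f = g.comp (b := 1) T.mor₃ (by omega) := by
  obtain ⟨g, hg⟩ := (ShortComplex.ab_exact_iff _).1
    ((preadditiveCoyoneda.obj (.op W)).homologySequence_exact₁ T hT n n' h) f hf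
  exact ⟨g, hg.symm.trans (preadditiveCoyoneda_homologySequenceδ_apply T n n' h g)⟩

end Triangles

section OrthHeart

/-- `^⊥(U^⊥) ∩ (U[1])^⊥`: the heart of the t-structure whose aisle is generated by `U`, when there
is one. Being cut out by orthogonality conditions, it is closed under extensions without the
octahedral axiom. -/
def orthHeart (U : Set C) : Set C := lOrth (rOrth U) ∩ rOrth (shSet U 1)

variable {U : Set C} {T : Triangle C}

lemma orthHeart_ext₂ (hT : T ∈ distTriang C) (h₁ : T.obj₁ ∈ orthHeart U)
    (h₃ : T.obj₃ ∈ orthHeart U) : T.obj₂ ∈ orthHeart U :=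
  ⟨lOrth_ext₂ hT h₁.1 h₃.1, rOrth_ext₂ hT h₁.2 h₃.2⟩

lemma star_subset_orthHeart {P Q : Set C} (hP : P ⊆ orthHeart U) (hQ : Q ⊆ orthHeart U) :
    star P Q ⊆ orthHeart U := by
  rintro X ⟨A, hA, B, hB, f, g, h, hT⟩
  exact orthHeart_ext₂ hT (hP hA) (hQ hB)

/-- In the abelian category `orthHeart U` this says that the kernel of the composite of two
epimorphisms lies in the category. -/
lemma orthHeart_fiber_comp (hU : shSet U 1 ⊆ U) {K K' K'' A A' A'' : C}
    {i : K ⟶ A'} {p : A' ⟶ A} {d : A ⟶ K⟦(1 : ℤ)⟧} (hT : Triangle.mk i p d ∈ distTriang C)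
    {i' : K' ⟶ A''} {p' : A'' ⟶ A'} {d' : A' ⟶ K'⟦(1 : ℤ)⟧}
    (hT' : Triangle.mk i' p' d' ∈ distTriang C)
    {i'' : K'' ⟶ A''} {d'' : A ⟶ K''⟦(1 : ℤ)⟧}
    (hT'' : Triangle.mk i'' (p' ≫ p) d'' ∈ distTriang C)
    (hK : K ∈ orthHeart U) (hK' : K' ∈ orthHeart U) (hA : A ∈ orthHeart U) :
    K'' ∈ orthHeart U := by
  have hA'' : A'' ∈ orthHeart U := orthHeart_ext₂ hT' hK' (orthHeart_ext₂ hT hK hA)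
  constructor
  · rw [← shift_mem_lOrth_shSet_iff 1]
    intro Y hY f
    have hp'p : p' ≫ p ≫ d'' ≫ f = 0 := by
      rw [← assoc p' p]
      exact (comp_distTriang_mor_zero₂₃_assoc _ hT'' f).trans zero_comp
    have hp : p ≫ d'' ≫ f = 0 :=
      eq_zero_of_mor₂_comp_eq_zero hT' ((shift_mem_lOrth_shSet_iff 1).2 hK'.1) hY hp'p
    have hd'' : d'' ≫ f = 0 :=
      eq_zero_of_mor₂_comp_eq_zero hT ((shift_mem_lOrth_shSet_iff 1).2 hK.1) hY hp
    exact eq_zero_of_mor₂_comp_eq_zero (rot_of_distTriang _ hT'')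
      ((shift_mem_lOrth_shSet_iff 1).2 hA''.1) hY hd''
  · refine rOrth_ext₂ (inv_rot_of_distTriang _ hT'') ?_ hA''.2
    apply rOrth_anti hU
    simpa [rOrth_shSet, mem_shSet_iff (isIsoClosed_rOrth U)] using hA.2

end OrthHeart

section Effaceable

/-- Effaceability of `f` with respect to `H`: factorization through `K[1]` for some `K ∈ H`. In
terms of triangles: `f` is killed by some `E ⟶ A` whose fibre `K` lies in `H`. -/
def Effaceable {D : Type*} [Category* D] [HasShift D ℤ] (H : Set D) {A Y : D} (f : A ⟶ Y) : Prop :=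
  ∃ K ∈ H, ∃ (g : A ⟶ K⟦(1 : ℤ)⟧) (h : K⟦(1 : ℤ)⟧ ⟶ Y), g ≫ h = f

section

variable {D : Type*} [Category* D] [HasShift D ℤ] {H H' : Set D} {A A' B Y Y' : D}

lemma Effaceable.comp {f : A ⟶ Y} (hf : Effaceable H f) (g : Y ⟶ Y') : Effaceable H (f ≫ g) := by
  obtain ⟨K, hK, a, b, rfl⟩ := hf
  exact ⟨K, hK, a, b ≫ g, (assoc ..).symm⟩

lemma Effaceable.precomp {f : A ⟶ Y} (hf : Effaceable H f) (g : A' ⟶ A) : Effaceable H (g ≫ f) := by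
  obtain ⟨K, hK, a, b, rfl⟩ := hf
  exact ⟨K, hK, g ≫ a, b, assoc ..⟩

lemma Effaceable.map_shift {f : A ⟶ Y} (hf : Effaceable H f) (a : ℤ) :
    Effaceable (shSet H a) (f⟦a⟧') := by
  obtain ⟨K, hK, g, h, rfl⟩ := hf
  exact ⟨K⟦a⟧, shift_mem_shSet a hK, g⟦a⟧' ≫ (shiftComm K 1 a).hom, (shiftComm K 1 a).inv ≫ h⟦a⟧',
    by simp⟩

lemma effaceable_of_forall_shift {n a : ℤ}
    (h : ∀ A ∈ H, ∀ B ∈ H, ∀ f : A ⟶ B⟦n⟧, Effaceable H f)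
    (hA : A ∈ shSet H a) (hB : B ∈ shSet H a) (f : A ⟶ B⟦n⟧) : Effaceable (shSet H a) f := by
  obtain ⟨X, hX, ⟨eA⟩⟩ := hA
  obtain ⟨Z, hZ, ⟨eB⟩⟩ := hB
  let J : B⟦n⟧ ≅ Z⟦n⟧⟦a⟧ := (shiftFunctor D n).mapIso eB ≪≫ shiftComm Z a n
  obtain ⟨g, hg⟩ := (shiftFunctor D a).map_surjective (eA.inv ≫ f ≫ J.hom)
  have hf : f = eA.hom ≫ g⟦a⟧' ≫ J.inv := by simp [hg]
  rw [hf]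
  exact (((h X hX Z hZ g).map_shift a).comp _).precomp _

lemma FactorsDeg.effaceable {n : ℕ} {f : A ⟶ B⟦((n + 2 : ℕ) : ℤ)⟧} (hf : FactorsDeg H (n + 2) f) :
    Effaceable H f := by
  obtain ⟨K, hK, g, h, -, e⟩ := hf
  exact ⟨K, hK, g, _, e.symm⟩

lemma FactorsDeg.mono (hH : H ⊆ H') : ∀ {n : ℕ} {A B : D} {f : A ⟶ B⟦(n : ℤ)⟧},
    FactorsDeg H n f → FactorsDeg H' n f
  | 0, _, _, _, _ => trivial
  | 1, _, _, _, _ => trivial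
  | _ + 2, _, _, _, ⟨K, hK, g, h, hh, e⟩ => ⟨K, hH hK, g, h, hh.mono hH, e⟩

lemma shiftedHom_comp_map {a b c : ℤ} (α : ShiftedHom A A' a) (β : ShiftedHom A' Y b)
    (h : b + a = c) (γ : Y ⟶ Y') : α.comp β h ≫ γ⟦c⟧' = α.comp (β ≫ γ⟦b⟧' : A' ⟶ Y'⟦b⟧) h := by
  rw [← ShiftedHom.comp_mk₀ _ 0 rfl, ← ShiftedHom.comp_mk₀ β 0 rfl]
  exact ShiftedHom.comp_assoc (M := ℤ) _ _ _ _ _ (by omega)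

lemma FactorsDeg.comp_map : ∀ {n : ℕ} {A B : D} {f : A ⟶ B⟦(n : ℤ)⟧} {B' : D},
    FactorsDeg H n f → ∀ g : B ⟶ B', FactorsDeg H n (f ≫ g⟦(n : ℤ)⟧')
  | 0, _, _, _, _, _, _ => trivial
  | 1, _, _, _, _, _, _ => trivial
  | _ + 2, _, _, _, _, ⟨K, hK, k, h, hh, e⟩, g =>
    ⟨K, hK, k, _, hh.comp_map g, by rw [e]; exact shiftedHom_comp_map k h _ g⟩

lemma FactorsDeg.exists_comp_degree_one : ∀ {n : ℕ} {A B : D}, A ∈ H →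
    ∀ {f : A ⟶ B⟦((n + 1 : ℕ) : ℤ)⟧}, FactorsDeg H (n + 1) f →
    ∃ K ∈ H, ∃ (u : ShiftedHom A K (n : ℤ)) (k : ShiftedHom K B (1 : ℤ)),
      u.comp k (by push_cast; ring) = f
  | 0, A, _, hA, f, _ => ⟨A, hA, .mk₀ _ rfl (𝟙 A), f, ShiftedHom.mk₀_id_comp ..⟩
  | n + 1, _, _, _, f, ⟨K, hK, g, h, hh, e⟩ => by
    obtain ⟨L, hL, u, k, rfl⟩ := hh.exists_comp_degree_one hK
    exact ⟨L, hL, ShiftedHom.comp g u (by push_cast; ring), k,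
      (ShiftedHom.comp_assoc (M := ℤ) g u k _ _ (by push_cast; ring)).trans e.symm⟩

lemma hasAllExt_of_effaceable
    (h : ∀ n : ℕ, ∀ A ∈ H, ∀ B ∈ H, ∀ f : A ⟶ B⟦((n + 2 : ℕ) : ℤ)⟧, Effaceable H f) :
    HasAllExt H
  | 0, _, _, _, _, _ => trivial
  | 1, _, _, _, _, _ => trivial
  | n + 2, A, hA, B, hB, f => by
    obtain ⟨K, hK, g, b, rfl⟩ := h n A hA B hB f
    let I := (shiftFunctorAdd' D ((n + 1 : ℕ) : ℤ) 1 ((n + 2 : ℕ) : ℤ) (by push_cast; ring)).app B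
    obtain ⟨c, hc⟩ := (shiftFunctor D (1 : ℤ)).map_surjective (b ≫ I.hom)
    refine ⟨K, hK, g, c, hasAllExt_of_effaceable h _ K hK B hB c, ?_⟩
    have hb : b = (b ≫ I.hom) ≫ I.inv := by simp
    rw [hc]
    exact congrArg (g ≫ ·) hb

end

variable {H U : Set C} {A Y : C}

lemma Effaceable.exists_triangle {f : A ⟶ Y} (hf : Effaceable H f) :
    ∃ K ∈ H, ∃ (E : C) (i : K ⟶ E) (p : E ⟶ A) (d : A ⟶ K⟦(1 : ℤ)⟧),
      Triangle.mk i p d ∈ distTriang C ∧ p ≫ f = 0 := by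
  obtain ⟨K, hK, d, b, rfl⟩ := hf
  obtain ⟨E, i, p, hT⟩ := distinguished_cocone_triangle₂ d
  exact ⟨K, hK, E, i, p, d, hT, (comp_distTriang_mor_zero₂₃_assoc _ hT b).trans zero_comp⟩

lemma Effaceable.of_mor₂_comp (hU : shSet U 1 ⊆ U) {T : Triangle C} (hT : T ∈ distTriang C)
    (h₁ : T.obj₁ ∈ orthHeart U) (h₃ : T.obj₃ ∈ orthHeart U) {f : T.obj₃ ⟶ Y}
    (hf : Effaceable (orthHeart U) (T.mor₂ ≫ f)) : Effaceable (orthHeart U) f := by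
  obtain ⟨K', hK', E, i', p', d', hT', hp'⟩ := hf.exists_triangle
  obtain ⟨K'', i'', d'', hT''⟩ := distinguished_cocone_triangle₁ (p' ≫ T.mor₂)
  obtain ⟨g, hg⟩ := Triangle.yoneda_exact₃ _ hT'' f ((assoc ..).trans hp')
  exact ⟨K'', orthHeart_fiber_comp hU hT hT' hT'' h₁ hK' h₃, d'', g, hg.symm⟩

end Effaceable

section Devissage

variable {U H X₁ X₂ : Set C} {A B : C}

lemma effaceable_of_mem_star (hU : shSet U 1 ⊆ U) (hX₁ : X₁ ⊆ orthHeart U)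
    (hext : ∀ T ∈ distTriang C, T.obj₁ ∈ X₁ → T.obj₃ ∈ X₁ → T.obj₂ ∈ X₁) {n : ℤ}
    (h₁₁ : ∀ A ∈ X₁, ∀ B ∈ X₁, ∀ f : A ⟶ B⟦n⟧, Effaceable X₁ f)
    (h₁₂ : ∀ A ∈ X₁, ∀ B ∈ X₂, ∀ f : A ⟶ B⟦n⟧, Effaceable (orthHeart U) f)
    (hA : A ∈ X₁) (hB : B ∈ star X₂ X₁) (f : A ⟶ B⟦n⟧) : Effaceable (orthHeart U) f := by
  obtain ⟨B₂, hB₂, B₁, hB₁, i, p, d, hT⟩ := hB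
  obtain ⟨K, hK, E, j, q, c, hTE, hq⟩ := (h₁₁ A hA B₁ hB₁ (f ≫ p⟦n⟧')).exists_triangle
  obtain ⟨v, hv⟩ := coyoneda_exact₂_shift hT (q ≫ f) ((assoc ..).trans hq)
  refine .of_mor₂_comp hU hTE (hX₁ hK) (hX₁ hA) ?_
  exact hv ▸ (h₁₂ E (hext _ hTE hK hA) B₂ hB₂ v).comp _

lemma factorsDeg_of_mem_star {n : ℕ} (h₁ : ∀ Y ∈ X₁, ∀ f : A ⟶ Y⟦(n : ℤ)⟧, f = 0)
    (h₂ : ∀ Y ∈ X₂, ∀ f : A ⟶ Y⟦(n : ℤ)⟧, FactorsDeg H n f) (hB : B ∈ star X₂ X₁)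
    (f : A ⟶ B⟦(n : ℤ)⟧) : FactorsDeg H n f := by
  obtain ⟨B₂, hB₂, B₁, hB₁, i, p, d, hT⟩ := hB
  obtain ⟨v, rfl⟩ := coyoneda_exact₂_shift hT f (h₁ B₁ hB₁ _)
  exact (h₂ B₂ hB₂ v).comp_map i

theorem hasAllExt_orthHeart_of_subset_star (hU : shSet U 1 ⊆ U)
    (hX₂ : X₂ ⊆ orthHeart U) (hstar : orthHeart U ⊆ star X₂ X₁)
    (heff : ∀ n : ℕ, ∀ A ∈ X₁, ∀ B ∈ orthHeart U, ∀ f : A ⟶ B⟦((n + 2 : ℕ) : ℤ)⟧,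
      Effaceable (orthHeart U) f)
    (hfac : ∀ n : ℕ, ∀ A ∈ X₂, ∀ B ∈ orthHeart U, ∀ f : A ⟶ B⟦(n : ℤ)⟧,
      FactorsDeg (orthHeart U) n f) :
    HasAllExt (orthHeart U) := by
  suffices ∀ n : ℕ, ∀ A ∈ orthHeart U, ∀ B ∈ orthHeart U, ∀ f : A ⟶ B⟦((n + 1 : ℕ) : ℤ)⟧,
      Effaceable (orthHeart U) f from hasAllExt_of_effaceable fun n ↦ this (n + 1)
  intro n
  induction n with
  | zero => exact fun _ _ B hB f ↦ ⟨B, hB, f, 𝟙 _, comp_id f⟩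
  | succ n ih =>
    intro A hA B hB f
    obtain ⟨A₂, hA₂, A₁, hA₁, i, p, d, hTA⟩ := hstar hA
    obtain ⟨D, hD, u, k, huk⟩ := (hfac (n + 2) A₂ hA₂ B hB (i ≫ f)).exists_comp_degree_one (hX₂ hA₂)
    obtain ⟨B', w, r, hTB⟩ := distinguished_cocone_triangle₂ k
    have hB' : B' ∈ orthHeart U := orthHeart_ext₂ hTB hB hD
    have hifw : i ≫ f ≫ w⟦((n + 2 : ℕ) : ℤ)⟧' = 0 := by
      have hkw : k ≫ w⟦(1 : ℤ)⟧' = 0 := comp_distTriang_mor_zero₃₁ _ hTB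
      rw [← assoc, ← huk, shiftedHom_comp_map, hkw, ShiftedHom.comp_zero]
    obtain ⟨g, hg⟩ := Triangle.yoneda_exact₂ _ hTA _ hifw
    have hfw : Effaceable (orthHeart U) (f ≫ w⟦((n + 2 : ℕ) : ℤ)⟧') := by
      rw [hg]
      exact (heff n A₁ hA₁ B' hB' g).precomp p
    obtain ⟨K, hK, E, j, q, c, hTE, hq⟩ := hfw.exists_triangle
    have hE : E ∈ orthHeart U := orthHeart_ext₂ hTE hK hA
    obtain ⟨v, hv⟩ := coyoneda_exact₁_shift hTB (n := (n + 1 : ℕ)) (by push_cast; ring) (q ≫ f)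
      ((assoc ..).trans hq)
    refine .of_mor₂_comp hU hTE hK hA ?_
    exact hv ▸ (ih E hE D hD v).comp _

end Devissage

section TStructure

variable {S le : Set C}

lemma IsTriangulatedSub.shSet_eq (hS : IsTriangulatedSub S) (n : ℤ) : shSet S n = S := by
  ext X
  rw [mem_shSet_iff fun _ _ e ↦ hS.isoClosed e]
  refine ⟨fun hX ↦ ?_, hS.shift (-n) X⟩
  exact hS.isoClosed (shiftNegShift X n) (hS.shift n _ hX)

lemma IsTriangulatedSub.shSet_inter_rOrth (hS : IsTriangulatedSub S) (le : Set C) (n : ℤ) :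
    shSet (S ∩ rOrth le) n = S ∩ rOrth (shSet le n) := by
  rw [shSet_inter (fun _ _ e ↦ hS.isoClosed e) (isIsoClosed_rOrth le), hS.shSet_eq, rOrth_shSet]

lemma IsTStructureOn.shSet_subset (h : IsTStructureOn S le) (hS : IsTriangulatedSub S) (n : ℤ) :
    shSet le n ⊆ S :=
  (shSet_mono h.subset n).trans (hS.shSet_eq n).subset

lemma IsTStructureOn.shSet_one_subset (h : IsTStructureOn S le) : shSet le 1 ⊆ le :=
  fun _ ⟨X, hX, ⟨e⟩⟩ ↦ h.isoClosed e.symm (h.shift X hX)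

lemma IsTStructureOn.shSet_add_one_subset (h : IsTStructureOn S le) (n : ℤ) :
    shSet le (n + 1) ⊆ shSet le n := by
  rw [← shSet_shSet le 1 n (n + 1) (add_comm 1 n)]
  exact shSet_mono h.shSet_one_subset n

lemma IsTStructureOn.eq_inter_lOrth (h : IsTStructureOn S le) :
    le = S ∩ lOrth (S ∩ rOrth le) := by
  refine Set.Subset.antisymm (fun X hX ↦ ⟨h.subset hX, fun Y hY ↦ hY.2 X hX⟩) ?_
  rintro X ⟨hXS, hX⟩
  obtain ⟨A, B, hA, hB, f, g, d, hT⟩ := h.exists_triangle X hXS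
  have hB₀ : IsZero B := by
    rw [IsZero.iff_id_eq_zero]
    have hAB : A⟦(1 : ℤ)⟧ ∈ lOrth (rOrth le) := subset_lOrth_rOrth le (h.shift A hA)
    exact eq_zero_of_mor₂_comp_eq_zero hT hAB hB.2 ((comp_id g).trans (hX B hB g))
  have : IsIso f := (Triangle.isZero₃_iff_isIso₁ _ hT).1 hB₀
  exact h.isoClosed (asIso f) hA

lemma IsTStructureOn.shSet_eq_inter_lOrth (h : IsTStructureOn S le) (hS : IsTriangulatedSub S)
    (n : ℤ) : shSet le n = S ∩ lOrth (S ∩ rOrth (shSet le n)) := by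
  conv_lhs => rw [h.eq_inter_lOrth]
  rw [shSet_inter (fun _ _ e ↦ hS.isoClosed e) (isIsoClosed_lOrth _), hS.shSet_eq, ← lOrth_shSet,
    hS.shSet_inter_rOrth]

lemma IsTStructureOn.heartOn_eq (h : IsTStructureOn S le) (hS : IsTriangulatedSub S) :
    heartOn S le = le ∩ rOrth (shSet le 1) := by
  rw [heartOn, leN, geN, neg_zero, sub_zero, shSet_zero fun _ _ e ↦ h.isoClosed e,
    hS.shSet_inter_rOrth, ← Set.inter_assoc, Set.inter_eq_left.2 h.subset]

lemma IsTStructureOn.shSet_heartOn (h : IsTStructureOn S le) (hS : IsTriangulatedSub S) (n : ℤ) :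
    shSet (heartOn S le) n = shSet le n ∩ rOrth (shSet le (n + 1)) := by
  rw [h.heartOn_eq hS, shSet_inter (fun _ _ e ↦ h.isoClosed e) (isIsoClosed_rOrth _),
    ← rOrth_shSet, shSet_shSet _ _ _ _ (add_comm 1 n)]

lemma IsTStructureOn.shSet_heartOn_ext₂ (h : IsTStructureOn S le) (hS : IsTriangulatedSub S)
    {n : ℤ} {T : Triangle C} (hT : T ∈ distTriang C) (h₁ : T.obj₁ ∈ shSet (heartOn S le) n)
    (h₃ : T.obj₃ ∈ shSet (heartOn S le) n) : T.obj₂ ∈ shSet (heartOn S le) n := by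
  rw [h.shSet_heartOn hS, h.shSet_eq_inter_lOrth hS] at h₁ h₃ ⊢
  exact ⟨⟨hS.ext₂ T hT h₁.1.1 h₃.1.1, lOrth_ext₂ hT h₁.1.2 h₃.1.2⟩, rOrth_ext₂ hT h₁.2 h₃.2⟩

end TStructure

section Gluing

variable {S₁ S₂ le₁ le₂ : Set C}

lemma IsSOD.subset_rOrth (h : IsSOD S₁ S₂) : S₁ ⊆ rOrth S₂ := fun Y hY X hX ↦ h.orth X hX Y hY

lemma IsSOD.subset_lOrth (h : IsSOD S₁ S₂) : S₂ ⊆ lOrth S₁ := h.orth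

lemma Compatible.inter_rOrth_shSet_subset (hcomp : Compatible S₂ le₁ le₂)
    (hS₂ : IsTriangulatedSub S₂) (n : ℤ) :
    S₂ ∩ rOrth (shSet le₂ n) ⊆ rOrth (shSet le₁ n) := by
  rw [← hS₂.shSet_inter_rOrth, rOrth_shSet]
  exact shSet_mono (fun Y hY X hX ↦ hcomp X hX Y hY) n

/-- Generators `T₂^{≤0} ∪ T₁^{≤0}[1]` of the aisle `glued le₁ le₂`. They have the same right
orthogonal as the aisle, and unlike for the aisle no triangles are involved in shifting them. -/
def gluedGen (le₁ le₂ : Set C) : Set C := le₂ ∪ shSet le₁ 1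

lemma shSet_gluedGen_subset (h₁ : IsTStructureOn S₁ le₁) (h₂ : IsTStructureOn S₂ le₂) :
    shSet (gluedGen le₁ le₂) 1 ⊆ gluedGen le₁ le₂ := by
  rw [gluedGen, shSet_union]
  exact Set.union_subset_union h₂.shSet_one_subset (shSet_mono h₁.shSet_one_subset 1)

lemma rOrth_shSet_gluedGen {D : Type*} [Category* D] [Preadditive D] [HasShift D ℤ]
    (le₁ le₂ : Set D) :
    rOrth (shSet (gluedGen le₁ le₂) 1) = rOrth (shSet le₂ 1) ∩ rOrth (shSet le₁ 2) := by
  rw [gluedGen, shSet_union, rOrth_union, shSet_shSet le₁ 1 1 2 rfl]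

lemma heartOn_subset_orthHeart (hSOD : IsSOD S₁ S₂) (h₁ : IsTStructureOn S₁ le₁)
    (h₂ : IsTStructureOn S₂ le₂) (hcomp : Compatible S₂ le₁ le₂) :
    heartOn S₂ le₂ ⊆ orthHeart (gluedGen le₁ le₂) := by
  rw [h₂.heartOn_eq hSOD.sub₂, orthHeart, rOrth_shSet_gluedGen]
  rintro X ⟨hX, hX₂⟩
  refine ⟨subset_lOrth_rOrth _ (.inl hX), hX₂, ?_⟩
  exact rOrth_anti (h₁.shSet_add_one_subset 1)
    (hcomp.inter_rOrth_shSet_subset hSOD.sub₂ 1 ⟨h₂.subset hX, hX₂⟩)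

lemma shSet_heartOn_subset_orthHeart (hSOD : IsSOD S₁ S₂) (h₁ : IsTStructureOn S₁ le₁)
    (h₂ : IsTStructureOn S₂ le₂) :
    shSet (heartOn S₁ le₁) 1 ⊆ orthHeart (gluedGen le₁ le₂) := by
  rw [h₁.shSet_heartOn hSOD.sub₁, orthHeart, rOrth_shSet_gluedGen]
  rintro X ⟨hX, hX₁⟩
  refine ⟨subset_lOrth_rOrth _ (.inr hX), ?_, hX₁⟩
  exact rOrth_anti (h₂.shSet_subset hSOD.sub₂ 1)
    (hSOD.subset_rOrth (h₁.shSet_subset hSOD.sub₁ 1 hX))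

lemma inter_rOrth_subset_rOrth_gluedGen (h₁ : IsTStructureOn S₁ le₁)
    (hcomp : Compatible S₂ le₁ le₂) : S₂ ∩ rOrth le₂ ⊆ rOrth (gluedGen le₁ le₂) := by
  rw [gluedGen, rOrth_union]
  refine fun Y hY ↦ ⟨hY.2, rOrth_anti h₁.shSet_one_subset fun X hX ↦ hcomp X hX Y hY⟩

lemma inter_rOrth_shSet_subset_rOrth_gluedGen (hSOD : IsSOD S₁ S₂) (h₂ : IsTStructureOn S₂ le₂) :
    S₁ ∩ rOrth (shSet le₁ 1) ⊆ rOrth (gluedGen le₁ le₂) := by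
  rw [gluedGen, rOrth_union]
  exact fun Y hY ↦ ⟨rOrth_anti h₂.subset (hSOD.subset_rOrth hY.1), hY.2⟩

lemma orthHeart_gluedGen_subset_star (hSOD : IsSOD S₁ S₂) (h₁ : IsTStructureOn S₁ le₁)
    (h₂ : IsTStructureOn S₂ le₂) (hcomp : Compatible S₂ le₁ le₂) :
    orthHeart (gluedGen le₁ le₂) ⊆ star (heartOn S₂ le₂) (shSet (heartOn S₁ le₁) 1) := by
  rw [orthHeart, rOrth_shSet_gluedGen]
  rintro X ⟨hX, hX₂, hX₁⟩
  obtain ⟨A, B, hA, hB, f, g, d, hT⟩ := hSOD.exists_triangle X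
  have hBle : B ∈ shSet le₁ 1 := by
    rw [h₁.shSet_eq_inter_lOrth hSOD.sub₁]
    refine ⟨hB, lOrth_ext₂ (rot_of_distTriang _ hT) ?_ ?_⟩
    · exact lOrth_anti (inter_rOrth_shSet_subset_rOrth_gluedGen hSOD h₂) hX
    · exact lOrth_anti Set.inter_subset_left (hSOD.subset_lOrth (hSOD.sub₂.shift 1 A hA))
  have hAle : A ∈ le₂ := by
    rw [h₂.eq_inter_lOrth]
    refine ⟨hA, lOrth_ext₂ (inv_rot_of_distTriang _ hT) (hcomp _ ?_) ?_⟩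
    · exact (mem_shSet_iff (fun _ _ e ↦ h₁.isoClosed e) 1).1 hBle
    · exact lOrth_anti (inter_rOrth_subset_rOrth_gluedGen h₁ hcomp) hX
  have hAge : A ∈ rOrth (shSet le₂ 1) := by
    refine rOrth_ext₂ (inv_rot_of_distTriang _ hT) ?_ hX₂
    exact rOrth_anti (h₂.shSet_subset hSOD.sub₂ 1) (hSOD.subset_rOrth (hSOD.sub₁.shift (-1) B hB))
  have hBge : B ∈ rOrth (shSet le₁ 2) := by
    refine rOrth_ext₂ (rot_of_distTriang _ hT) hX₁ ?_
    rw [← shSet_shSet le₁ 1 1 2 rfl]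
    exact (shift_mem_rOrth_shSet_iff 1).2
      (hcomp.inter_rOrth_shSet_subset hSOD.sub₂ 1 ⟨hA, hAge⟩)
  refine ⟨A, ?_, B, ?_, f, g, d, hT⟩
  · exact h₂.heartOn_eq hSOD.sub₂ ▸ ⟨hAle, hAge⟩
  · exact h₁.shSet_heartOn hSOD.sub₁ 1 ▸ ⟨hBle, hBge⟩

lemma star_heartOn_eq_orthHeart (hSOD : IsSOD S₁ S₂) (h₁ : IsTStructureOn S₁ le₁)
    (h₂ : IsTStructureOn S₂ le₂) (hcomp : Compatible S₂ le₁ le₂) :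
    star (heartOn S₂ le₂) (shSet (heartOn S₁ le₁) 1) = orthHeart (gluedGen le₁ le₂) :=
  (star_subset_orthHeart (heartOn_subset_orthHeart hSOD h₁ h₂ hcomp)
    (shSet_heartOn_subset_orthHeart hSOD h₁ h₂)).antisymm
    (orthHeart_gluedGen_subset_star hSOD h₁ h₂ hcomp)

end Gluing

/-- Corollary A.8: under the gluing setup, if each `T_i` has the
factorization property for its heart `A_i`, and morphisms from objects of `A₁[1]` to
shifts of objects of `A₂` factor through chains in the glued heart `A`, then `C` has
the factorization property (all the Ext groups) for the glued heart `A = A₂ * A₁[1]`. -/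
theorem glued_hasAllExt {C : Type u} [Category.{v} C] [HasZeroObject C] [Preadditive C]
    [HasShift C ℤ] [∀ n : ℤ, (shiftFunctor C n).Additive] [Pretriangulated C]
    (S₁ S₂ le₁ le₂ : Set C) (hSOD : IsSOD S₁ S₂)
    (h₁ : IsTStructureOn S₁ le₁) (h₂ : IsTStructureOn S₂ le₂)
    (hcomp : Compatible S₂ le₁ le₂)
    (hext₁ : HasAllExt (heartOn S₁ le₁)) (hext₂ : HasAllExt (heartOn S₂ le₂))
    (hrel : ∀ A ∈ shSet (heartOn S₁ le₁) 1, ∀ B ∈ heartOn S₂ le₂, ∀ (m : ℕ),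
      1 ≤ m → ∀ f : A ⟶ B⟦(m : ℤ)⟧,
        FactorsDeg (star (heartOn S₂ le₂) (shSet (heartOn S₁ le₁) 1)) m f) :
    HasAllExt (star (heartOn S₂ le₂) (shSet (heartOn S₁ le₁) 1)) := by
  have hS₁ := hSOD.sub₁
  have hX₁ := shSet_heartOn_subset_orthHeart hSOD h₁ h₂
  have hX₂ := heartOn_subset_orthHeart hSOD h₁ h₂ hcomp
  have hU := shSet_gluedGen_subset h₁ h₂
  have heart_eq := star_heartOn_eq_orthHeart hSOD h₁ h₂ hcomp
  rw [heart_eq] at hrel ⊢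
  refine hasAllExt_orthHeart_of_subset_star hU hX₂ heart_eq.ge ?_ ?_
  · intro n A hA B hB
    refine effaceable_of_mem_star hU hX₁ (fun _ hT ↦ h₁.shSet_heartOn_ext₂ hS₁ hT) ?_ ?_ hA
      (heart_eq.ge hB)
    · exact fun A hA B hB ↦ effaceable_of_forall_shift
        (fun A hA B hB f ↦ (hext₁ _ A hA B hB f).effaceable) hA hB
    · exact fun A hA B hB f ↦ (hrel A hA B hB _ (by omega) f).effaceable
  · intro n A hA B hB
    refine factorsDeg_of_mem_star (fun Y hY ↦ ?_) (fun Y hY f ↦ ?_) (heart_eq.ge hB)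
    · have hAS₂ : A ∈ S₂ := h₂.subset (h₂.heartOn_eq hSOD.sub₂ ▸ hA).1
      have hYS₁ : Y ∈ S₁ := h₁.shSet_subset hS₁ 1 (h₁.shSet_heartOn hS₁ 1 ▸ hY).1
      exact hSOD.orth A hAS₂ _ (hS₁.shift n Y hYS₁)
    · exact (hext₂ n A hA Y hY f).mono hX₂

end Paper
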